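/- Let Y be a real random variable distributed according to the Gaussian measure with mean μ ∈ ℝ and variance σ² where σ > 0, and let a ∈ ℝ. Then E[max(Y − a, 0)] = (μ − a)·Φ((μ − a)/σ) + σ·φ((μ − a)/σ), where φ is the standard normal probability density function and Φ the standard normal cumulative distribution function. -/

import Mathlib

open MeasureTheory Set ProbabilityTheory

/-- The standard normal probability density function φ. -/
noncomputable def stdNormalPDF (z : ℝ) : ℝ :=
  (1 / Real.sqrt (2 * Real.pi)) * Real.exp (-z ^ 2 / 2)

/-- The standard normal cumulative distribution function Φ. -/
noncomputable def stdNormalCDF (z : ℝ) : ℝ :=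
  ∫ t in Iic z, stdNormalPDF t

open Filter Topology

lemma gaussianPDFReal_zero_one_eq_stdNormalPDF : gaussianPDFReal 0 1 = stdNormalPDF := by
  ext z
  simp [gaussianPDFReal, stdNormalPDF]

lemma integrable_stdNormalPDF : Integrable stdNormalPDF :=
  gaussianPDFReal_zero_one_eq_stdNormalPDF ▸ integrable_gaussianPDFReal 0 1

lemma integrable_id_mul_stdNormalPDF : Integrable fun z : ℝ ↦ z * stdNormalPDF z := by
  refine ((integrable_mul_exp_neg_mul_sq (b := 1 / 2) (by norm_num)).const_mul
    (1 / √(2 * Real.pi))).congr (.of_forall fun z ↦ ?_)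
  simp only [stdNormalPDF]
  ring_nf

lemma hasDerivAt_stdNormalPDF (z : ℝ) : HasDerivAt stdNormalPDF (-(z * stdNormalPDF z)) z := by
  have h : HasDerivAt (fun z : ℝ ↦ -z ^ 2 / 2) (-z) z := by
    refine (((hasDerivAt_id' z).fun_pow 2).fun_neg.div_const 2).congr_deriv ?_
    norm_num
    ring
  refine (h.exp.const_mul (1 / √(2 * Real.pi))).congr_deriv ?_
  simp only [stdNormalPDF]
  ring

lemma tendsto_stdNormalPDF_atBot : Tendsto stdNormalPDF atBot (𝓝 0) := by
  have hsq : Tendsto (fun z : ℝ ↦ -z ^ 2 / 2) atBot atBot := by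
    have h : Tendsto (fun z : ℝ ↦ z ^ 2) atBot atTop := by
      simpa [Function.comp_def] using (tendsto_pow_atTop two_ne_zero).comp (tendsto_abs_atBot_atTop (G := ℝ))
    exact (tendsto_neg_atTop_atBot.comp h).atBot_div_const two_pos
  exact mul_zero (1 / √(2 * Real.pi)) ▸ (Real.tendsto_exp_atBot.comp hsq).const_mul _

lemma integral_Iic_id_mul_stdNormalPDF (c : ℝ) :
    ∫ z in Iic c, z * stdNormalPDF z = -stdNormalPDF c := by
  have h := integral_Iic_of_hasDerivAt_of_tendsto' (a := c)
    (fun z _ ↦ hasDerivAt_stdNormalPDF z)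
    integrable_id_mul_stdNormalPDF.neg.integrableOn tendsto_stdNormalPDF_atBot
  rw [integral_neg, sub_zero] at h
  linarith

lemma gaussianReal_eq_map_stdNormal (μ σ : ℝ) :
    gaussianReal μ ⟨σ ^ 2, sq_nonneg σ⟩ = (gaussianReal 0 1).map fun z ↦ μ - σ * z := by
  have h := Measure.map_map (μ := gaussianReal 0 1) (g := fun z : ℝ ↦ μ - z)
    (f := fun z : ℝ ↦ σ * z) (by fun_prop) (by fun_prop)
  rw [gaussianReal_map_const_mul, gaussianReal_map_const_sub] at h
  simp only [mul_zero, mul_one, sub_zero] at h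
  exact h

/-- If `Y ~ N(μ, σ²)` with `σ > 0`, then
`E[max(Y − a, 0)] = (μ − a)·Φ((μ − a)/σ) + σ·φ((μ − a)/σ)`. -/
theorem expectedImprovement_gaussian (μ a σ : ℝ) (hσ : 0 < σ) :
    ∫ y, max (y - a) 0 ∂(gaussianReal μ ⟨σ ^ 2, sq_nonneg σ⟩) =
      (μ - a) * stdNormalCDF ((μ - a) / σ) + σ * stdNormalPDF ((μ - a) / σ) := by
  set c := (μ - a) / σ
  have hpos (z : ℝ) : stdNormalPDF z * max (μ - σ * z - a) 0 =
      (Iic c).indicator (fun z ↦ (μ - a) * stdNormalPDF z - σ * (z * stdNormalPDF z)) z := by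
    by_cases hz : z ≤ c
    · have : z * σ ≤ μ - a := (le_div_iff₀ hσ).1 hz
      rw [indicator_of_mem (mem_Iic.2 hz), max_eq_left (by linarith)]
      ring
    · have : μ - a < z * σ := (div_lt_iff₀ hσ).1 (not_le.1 hz)
      rw [indicator_of_notMem (by simpa using hz), max_eq_right (by linarith), mul_zero]
  rw [gaussianReal_eq_map_stdNormal, integral_map (by fun_prop) (by fun_prop),
    integral_gaussianReal_eq_integral_smul one_ne_zero, gaussianPDFReal_zero_one_eq_stdNormalPDF]
  simp only [smul_eq_mul, hpos]
  rw [integral_indicator measurableSet_Iic,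
    integral_sub (integrable_stdNormalPDF.const_mul _).integrableOn
      (integrable_id_mul_stdNormalPDF.const_mul _).integrableOn,
    integral_const_mul, integral_const_mul, integral_Iic_id_mul_stdNormalPDF, stdNormalCDF]
  ring
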